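/- arXiv:1203.5438 — 3 statements merged into one kernel-verified Lean document; each statement's English description precedes it below -/
import Mathlib

section
/- Let n, d, q be positive integers and let κ, ν, λ be positive real numbers, and let A ∈ ℝ^{n×n}. Then the function Ψ(S,W) = (κ/2)‖W‖_F² + (ν/2)‖S−A‖_F² + λ·Q(W, Λ(S), W) is convex on the set E = { (S,W) : S ∈ ℝ^{n×n} is symmetric with all entries nonnegative, and ‖W‖_F ≤ √(νκ) / (2λ(√n + 1)) }. -/
open scoped BigOperators
open Matrix

/-- Squared Frobenius norm of a matrix. -/
noncomputable def frobSq {n m : ℕ} (M : Matrix (Fin n) (Fin m) ℝ) : ℝ :=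
  ∑ i, ∑ j, (M i j) ^ 2

/-- Frobenius norm of a matrix. -/
noncomputable def frob {n m : ℕ} (M : Matrix (Fin n) (Fin m) ℝ) : ℝ :=
  Real.sqrt (frobSq M)

/-- Squared Frobenius norm of a collection of `n` matrices. -/
noncomputable def collFrobSq {n d q : ℕ} (W : Fin n → Matrix (Fin d) (Fin q) ℝ) : ℝ :=
  ∑ i, frobSq (W i)

/-- Frobenius norm of a collection of `n` matrices. -/
noncomputable def collFrob {n d q : ℕ} (W : Fin n → Matrix (Fin d) (Fin q) ℝ) : ℝ :=
  Real.sqrt (collFrobSq W)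

/-- Diagonal degree matrix of a square matrix. -/
noncomputable def degMatrix {n : ℕ} (Z : Matrix (Fin n) (Fin n) ℝ) : Matrix (Fin n) (Fin n) ℝ :=
  Matrix.diagonal (fun i => ∑ j, Z i j)

/-- Graph Laplacian of a square matrix. -/
noncomputable def lap {n : ℕ} (Z : Matrix (Fin n) (Fin n) ℝ) : Matrix (Fin n) (Fin n) ℝ :=
  degMatrix Z - Z

/-- The bilinear form `Q(W, M, V) = ∑ i j, M i j * Tr((W i)ᵀ (V j))`. -/
noncomputable def QForm {n d q : ℕ} (W : Fin n → Matrix (Fin d) (Fin q) ℝ)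
    (M : Matrix (Fin n) (Fin n) ℝ) (V : Fin n → Matrix (Fin d) (Fin q) ℝ) : ℝ :=
  ∑ i, ∑ j, M i j * ((W i)ᵀ * V j).trace

/-!
Along the segment from `(S, X)` to `(T, Y)` the form `Q(W, Λ(S), W)` falls short of its chord by
`a b` times `Q(X - Y, Λ(aS + bT), X - Y) + Q(X, Λ(S - T), X) - Q(Y, Λ(S - T), Y)`. The first term is
nonnegative, because the Laplacian of a nonnegative symmetric matrix is positive semidefinite. The
difference is at most `‖Λ(S - T)‖ (‖X‖ + ‖Y‖) ‖X - Y‖` in absolute value, where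
`‖Λ(Z)‖ ≤ (√n + 1) ‖Z‖`. The radius `r` of the ball solves `2 r λ (√n + 1) = √(ν κ)`, which by the
AM-GM inequality is exactly what the strong convexity of the two quadratic terms absorbs.
-/

theorem trilinear_apply_affine_comb {R E F : Type*} [CommRing R] [AddCommGroup E] [Module R E]
    [AddCommGroup F] [Module R F] (B : E →ₗ[R] LinearMap.BilinForm R F) {a b : R}
    (hab : a + b = 1) (s t : E) (x y : F) :
    B (a • s + b • t) (a • x + b • y) (a • x + b • y) =
      a * B s x x + b * B t y y -
        a * b * (B (a • s + b • t) (x - y) (x - y) + (B (s - t) x x - B (s - t) y y)) := by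
  obtain rfl : b = 1 - a := eq_sub_of_add_eq' hab
  simp only [map_add, map_sub, map_smul, LinearMap.add_apply, LinearMap.sub_apply,
    LinearMap.smul_apply, smul_eq_mul]
  ring

theorem abs_bilin_self_sub_le {F : Type*} [SeminormedAddCommGroup F] [Module ℝ F]
    {b : LinearMap.BilinForm ℝ F} {c : ℝ} (hb : ∀ v w, |b v w| ≤ c * ‖v‖ * ‖w‖) (x y : F) :
    |b x x - b y y| ≤ c * (‖x‖ + ‖y‖) * ‖x - y‖ := by
  have hsplit : b x x - b y y = b x (x - y) + b (x - y) y := by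
    simp only [map_sub, LinearMap.sub_apply]
    ring
  calc |b x x - b y y| ≤ |b x (x - y)| + |b (x - y) y| := hsplit ▸ abs_add_le _ _
    _ ≤ c * ‖x‖ * ‖x - y‖ + c * ‖x - y‖ * ‖y‖ := add_le_add (hb _ _) (hb _ _)
    _ = c * (‖x‖ + ‖y‖) * ‖x - y‖ := by ring

theorem sqrt_mul_mul_le_half_mul_sq_add_half_mul_sq {α β : ℝ} (hα : 0 ≤ α) (hβ : 0 ≤ β) (u v : ℝ) :
    √(α * β) * (u * v) ≤ α / 2 * u ^ 2 + β / 2 * v ^ 2 := by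
  have hamgm := two_mul_le_add_sq (√α * u) (√β * v)
  rw [mul_pow, mul_pow, Real.sq_sqrt hα, Real.sq_sqrt hβ] at hamgm
  rw [Real.sqrt_mul hα]
  linarith

theorem convexOn_add_add_trilinear_of_strongConvexOn {E F : Type*}
    [NormedAddCommGroup E] [NormedSpace ℝ E] [NormedAddCommGroup F] [NormedSpace ℝ F]
    {K : Set E} {T : Set F} {f : E → ℝ} {g : F → ℝ} {α β c r : ℝ}
    (hα : 0 ≤ α) (hβ : 0 ≤ β) (hc : 0 ≤ c) (hf : StrongConvexOn K α f) (hg : StrongConvexOn T β g)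
    (B : E →ₗ[ℝ] LinearMap.BilinForm ℝ F) (hB : ∀ s ∈ K, ∀ w, 0 ≤ B s w w)
    (hBc : ∀ s v w, |B s v w| ≤ c * ‖s‖ * ‖v‖ * ‖w‖) (hT : ∀ w ∈ T, ‖w‖ ≤ r)
    (hcr : 2 * c * r ≤ √(α * β)) :
    ConvexOn ℝ (K ×ˢ T) fun p ↦ f p.1 + g p.2 + B p.1 p.2 p.2 := by
  refine ⟨hf.1.prod hg.1, ?_⟩
  rintro ⟨s, x⟩ ⟨hs, hx⟩ ⟨t, y⟩ ⟨ht, hy⟩ a b ha hb hab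
  have hpos := hB _ (hf.1 hs ht ha hb hab) (x - y)
  have hcross : |B (s - t) x x - B (s - t) y y| ≤
      α / 2 * ‖s - t‖ ^ 2 + β / 2 * ‖x - y‖ ^ 2 := by
    calc |B (s - t) x x - B (s - t) y y|
        ≤ c * ‖s - t‖ * (‖x‖ + ‖y‖) * ‖x - y‖ := abs_bilin_self_sub_le (hBc (s - t)) x y
      _ ≤ c * ‖s - t‖ * (r + r) * ‖x - y‖ := by
          gcongr
          exacts [hT x hx, hT y hy]
      _ = 2 * c * r * (‖s - t‖ * ‖x - y‖) := by ring
      _ ≤ √(α * β) * (‖s - t‖ * ‖x - y‖) := by gcongr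
      _ ≤ α / 2 * ‖s - t‖ ^ 2 + β / 2 * ‖x - y‖ ^ 2 :=
          sqrt_mul_mul_le_half_mul_sq_add_half_mul_sq hα hβ _ _
  have hdefect : 0 ≤ a * b * (α / 2 * ‖s - t‖ ^ 2 + β / 2 * ‖x - y‖ ^ 2 +
      (B (a • s + b • t) (x - y) (x - y) + (B (s - t) x x - B (s - t) y y))) :=
    mul_nonneg (mul_nonneg ha hb) (by linarith [neg_le_of_abs_le hcross])
  have hf_comb := hf.2 hs ht ha hb hab
  have hg_comb := hg.2 hx hy ha hb hab
  simp only [smul_eq_mul] at hf_comb hg_comb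
  simp only [Prod.smul_mk, Prod.mk_add_mk, smul_eq_mul, trilinear_apply_affine_comb B hab]
  linarith

theorem strongConvexOn_half_mul_norm_sub_sq {E : Type*} [NormedAddCommGroup E]
    [InnerProductSpace ℝ E] {s : Set E} (hs : Convex ℝ s) (m : ℝ) (c : E) :
    StrongConvexOn s m fun x ↦ m / 2 * ‖x - c‖ ^ 2 := by
  have haffine : (fun x ↦ m / 2 * ‖x - c‖ ^ 2 - m / 2 * ‖x‖ ^ 2) =
      fun x ↦ (-m • innerₗ E c) x + m / 2 * ‖c‖ ^ 2 := by
    funext x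
    rw [norm_sub_sq_real, real_inner_comm]
    simp only [LinearMap.smul_apply, innerₗ_apply_apply, smul_eq_mul]
    ring
  rw [strongConvexOn_iff_convex, haffine]
  exact ((-m • innerₗ E c).convexOn hs).add_const _

open scoped Matrix.Norms.Frobenius

section FrobeniusInnerProduct

variable {m n : Type*} [Fintype m] [Fintype n]

theorem frobenius_norm_sq_eq_sum_sq (M : Matrix m n ℝ) : ‖M‖ ^ 2 = ∑ i, ∑ j, M i j ^ 2 := by
  rw [Matrix.frobenius_norm_def, ← Real.sqrt_eq_rpow, Real.sq_sqrt (by positivity)]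
  simp only [Real.rpow_ofNat, Real.norm_eq_abs, sq_abs]

/-- The Frobenius inner product `⟪M, N⟫ = Tr(Mᵀ N)` on real matrices, inducing the Frobenius norm.
It is only a local instance, like Mathlib's matrix norms. -/
noncomputable abbrev frobeniusInnerProductSpace : InnerProductSpace ℝ (Matrix m n ℝ) where
  inner M N := (Mᵀ * N).trace
  norm_sq_eq_re_inner M := by
    rw [frobenius_norm_sq_eq_sum_sq, Finset.sum_comm]
    simp [Matrix.trace, Matrix.mul_apply, sq]
  conj_inner_symm M N := by
    rw [← Matrix.trace_transpose, Matrix.transpose_mul, Matrix.transpose_transpose]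
    rfl
  add_left M N P := by simp [Matrix.add_mul]
  smul_left M N r := by simp

end FrobeniusInnerProduct

attribute [local instance] frobeniusInnerProductSpace

section LaplacianForm

variable {ι H : Type*} [Fintype ι] [NormedAddCommGroup H] [InnerProductSpace ℝ H]

/-- The form `Q(w, M, v) = ∑ i j, M i j * ⟪w i, v j⟫` attached to a block matrix `M ⊗ id`, for
families `w`, `v` of vectors of an inner product space, as a map linear in each of `M`, `w`, `v`.
The matrix is the first argument here. -/
noncomputable def blockForm :
    Matrix ι ι ℝ →ₗ[ℝ] LinearMap.BilinForm ℝ (PiLp 2 fun _ : ι ↦ H) :=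
  ∑ i, ∑ j, (Matrix.entryLinearMap ℝ ℝ i j).smulRight
    ((innerₗ H).compl₁₂ (PiLp.projₗ 2 (fun _ ↦ H) i) (PiLp.projₗ 2 (fun _ ↦ H) j))

theorem blockForm_apply (M : Matrix ι ι ℝ) (w v : PiLp 2 fun _ : ι ↦ H) :
    blockForm M w v = ∑ i, ∑ j, M i j * inner ℝ (w i) (v j) := by
  simp [blockForm, LinearMap.sum_apply]

theorem abs_blockForm_le (M : Matrix ι ι ℝ) (w v : PiLp 2 fun _ : ι ↦ H) :
    |blockForm M w v| ≤ ‖M‖ * ‖w‖ * ‖v‖ := by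
  refine abs_le_of_sq_le_sq ?_ (by positivity)
  calc blockForm M w v ^ 2
      = (∑ p : ι × ι, M p.1 p.2 * inner ℝ (w p.1) (v p.2)) ^ 2 := by
        rw [blockForm_apply, Fintype.sum_prod_type]
    _ ≤ (∑ p : ι × ι, M p.1 p.2 ^ 2) * ∑ p : ι × ι, inner ℝ (w p.1) (v p.2) ^ 2 :=
        Finset.sum_mul_sq_le_sq_mul_sq _ _ _
    _ ≤ (∑ p : ι × ι, M p.1 p.2 ^ 2) * ∑ p : ι × ι, ‖w p.1‖ ^ 2 * ‖v p.2‖ ^ 2 := by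
        gcongr with p
        rw [← mul_pow, ← sq_abs]
        gcongr
        exact abs_real_inner_le_norm _ _
    _ = (‖M‖ * ‖w‖ * ‖v‖) ^ 2 := by
        simp only [mul_pow, frobenius_norm_sq_eq_sum_sq, PiLp.norm_sq_eq_of_L2,
          Fintype.sum_prod_type, ← Finset.mul_sum, ← Finset.sum_mul, mul_assoc]

variable [DecidableEq ι]

/-- The graph Laplacian `Λ(Z) = D(Z) - Z` of a weight matrix `Z`, as a linear map. -/
noncomputable def graphLaplacian : Matrix ι ι ℝ →ₗ[ℝ] Matrix ι ι ℝ where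
  toFun Z := Matrix.diagonal (fun i ↦ ∑ j, Z i j) - Z
  map_add' Y Z := by
    simp only [Matrix.add_apply, Finset.sum_add_distrib, ← Matrix.diagonal_add]
    abel
  map_smul' r Z := by
    simp only [Matrix.smul_apply, ← Finset.smul_sum, RingHom.id_apply, smul_sub,
      ← Matrix.diagonal_smul]
    rfl

theorem graphLaplacian_apply (Z : Matrix ι ι ℝ) :
    graphLaplacian Z = Matrix.diagonal (fun i ↦ ∑ j, Z i j) - Z :=
  rfl

theorem norm_graphLaplacian_le (Z : Matrix ι ι ℝ) :
    ‖graphLaplacian Z‖ ≤ (√(Fintype.card ι) + 1) * ‖Z‖ := by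
  have hdeg : ‖Matrix.diagonal fun i ↦ ∑ j, Z i j‖ ≤ √(Fintype.card ι) * ‖Z‖ := by
    refine le_of_sq_le_sq ?_ (by positivity)
    rw [Matrix.frobenius_norm_diagonal, EuclideanSpace.real_norm_sq_eq, mul_pow,
      Real.sq_sqrt (Nat.cast_nonneg _), frobenius_norm_sq_eq_sum_sq, Finset.mul_sum]
    gcongr
    exact sq_sum_le_card_mul_sum_sq
  calc ‖graphLaplacian Z‖ ≤ ‖Matrix.diagonal fun i ↦ ∑ j, Z i j‖ + ‖Z‖ := norm_sub_le _ _
    _ ≤ (√(Fintype.card ι) + 1) * ‖Z‖ := by linarith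

theorem abs_blockForm_graphLaplacian_le (Z : Matrix ι ι ℝ) (w v : PiLp 2 fun _ : ι ↦ H) :
    |blockForm (graphLaplacian Z) w v| ≤ (√(Fintype.card ι) + 1) * ‖Z‖ * ‖w‖ * ‖v‖ :=
  (abs_blockForm_le _ w v).trans (by gcongr; exact norm_graphLaplacian_le Z)

theorem blockForm_graphLaplacian_self {Z : Matrix ι ι ℝ} (hZ : Z.IsSymm)
    (w : PiLp 2 fun _ : ι ↦ H) :
    blockForm (graphLaplacian Z) w w = 1 / 2 * ∑ i, ∑ j, Z i j * ‖w i - w j‖ ^ 2 := by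
  have hdiag : blockForm (Matrix.diagonal fun i ↦ ∑ j, Z i j) w w =
      ∑ i, ∑ j, Z i j * ‖w i‖ ^ 2 := by
    simp [blockForm_apply, Matrix.diagonal_apply, Finset.sum_mul]
  have hswap : ∑ i, ∑ j, Z i j * ‖w j‖ ^ 2 = ∑ i, ∑ j, Z i j * ‖w i‖ ^ 2 := by
    rw [Finset.sum_comm]
    simp only [hZ.apply]
  have hexpand : ∑ i, ∑ j, Z i j * ‖w i - w j‖ ^ 2 =
      ∑ i, ∑ j, Z i j * ‖w i‖ ^ 2 - 2 * blockForm Z w w + ∑ i, ∑ j, Z i j * ‖w j‖ ^ 2 := by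
    simp only [blockForm_apply, Finset.mul_sum, ← Finset.sum_add_distrib,
      ← Finset.sum_sub_distrib, norm_sub_sq_real]
    refine Finset.sum_congr rfl fun i _ ↦ Finset.sum_congr rfl fun j _ ↦ ?_
    ring
  rw [graphLaplacian_apply, map_sub, LinearMap.sub_apply, LinearMap.sub_apply, hdiag, hexpand,
    hswap]
  ring

theorem blockForm_graphLaplacian_self_nonneg {Z : Matrix ι ι ℝ} (hZ : Z.IsSymm)
    (hZ0 : ∀ i j, 0 ≤ Z i j) (w : PiLp 2 fun _ : ι ↦ H) :
    0 ≤ blockForm (graphLaplacian Z) w w := by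
  rw [blockForm_graphLaplacian_self hZ]
  exact mul_nonneg one_half_pos.le <| Finset.sum_nonneg fun i _ ↦ Finset.sum_nonneg fun j _ ↦
    mul_nonneg (hZ0 i j) (sq_nonneg _)

end LaplacianForm

theorem convex_setOf_isSymm_and_nonneg {ι : Type*} :
    Convex ℝ {S : Matrix ι ι ℝ | S.IsSymm ∧ ∀ i j, 0 ≤ S i j} :=
  fun _ hS _ hT a b ha hb _ ↦ ⟨(hS.1.smul a).add (hT.1.smul b), fun i j ↦
    add_nonneg (mul_nonneg ha (hS.2 i j)) (mul_nonneg hb (hT.2 i j))⟩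

theorem frobSq_eq_norm_sq {n m : ℕ} (M : Matrix (Fin n) (Fin m) ℝ) : frobSq M = ‖M‖ ^ 2 :=
  (frobenius_norm_sq_eq_sum_sq M).symm

theorem collFrobSq_eq_norm_sq {n d q : ℕ} (W : Fin n → Matrix (Fin d) (Fin q) ℝ) :
    collFrobSq W = ‖WithLp.toLp 2 W‖ ^ 2 := by
  simp only [collFrobSq, frobSq_eq_norm_sq, PiLp.norm_sq_eq_of_L2]

theorem collFrob_eq_norm {n d q : ℕ} (W : Fin n → Matrix (Fin d) (Fin q) ℝ) :
    collFrob W = ‖WithLp.toLp 2 W‖ := by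
  rw [collFrob, collFrobSq_eq_norm_sq, Real.sqrt_sq (norm_nonneg _)]

theorem QForm_lap_eq_blockForm {n d q : ℕ} (W V : Fin n → Matrix (Fin d) (Fin q) ℝ)
    (Z : Matrix (Fin n) (Fin n) ℝ) :
    QForm W (lap Z) V = blockForm (graphLaplacian Z) (WithLp.toLp 2 W) (WithLp.toLp 2 V) := by
  rw [blockForm_apply]
  rfl

theorem stmt0_general {ι H : Type*} [Fintype ι] [DecidableEq ι] [NormedAddCommGroup H]
    [InnerProductSpace ℝ H] {κ ν lam : ℝ} (hκ : 0 ≤ κ) (hν : 0 ≤ ν) (hlam : 0 < lam)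
    (A : Matrix ι ι ℝ) :
    ConvexOn ℝ
      {p : Matrix ι ι ℝ × PiLp 2 (fun _ : ι ↦ H) |
        p.1.IsSymm ∧ (∀ i j, 0 ≤ p.1 i j) ∧
        ‖p.2‖ ≤ √(ν * κ) / (2 * lam * (√(Fintype.card ι) + 1))}
      (fun p ↦ κ / 2 * ‖p.2‖ ^ 2 + ν / 2 * ‖p.1 - A‖ ^ 2
        + lam * blockForm (graphLaplacian p.1) p.2 p.2) := by
  set c := √(Fintype.card ι) + 1
  set r := √(ν * κ) / (2 * lam * c)
  have hc : 0 < c := by positivity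
  have hcr : 2 * (lam * c) * r = √(ν * κ) := by
    simp only [r]
    field_simp
  have hf := strongConvexOn_half_mul_norm_sub_sq (convex_setOf_isSymm_and_nonneg (ι := ι)) ν A
  have hg := strongConvexOn_half_mul_norm_sub_sq
    (convex_closedBall (0 : PiLp 2 fun _ : ι ↦ H) r) κ 0
  have hbound (S : Matrix ι ι ℝ) (v w : PiLp 2 fun _ : ι ↦ H) :
      |(lam • blockForm ∘ₗ graphLaplacian) S v w| ≤ lam * c * ‖S‖ * ‖v‖ * ‖w‖ := by
    simp only [LinearMap.smul_apply, LinearMap.comp_apply, smul_eq_mul, abs_mul, abs_of_pos hlam,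
      mul_assoc lam]
    gcongr
    simpa only [mul_assoc] using abs_blockForm_graphLaplacian_le S v w
  have hconv := convexOn_add_add_trilinear_of_strongConvexOn hν hκ (mul_pos hlam hc).le hf hg
    (lam • blockForm ∘ₗ graphLaplacian)
    (fun S hS w ↦ mul_nonneg hlam.le (blockForm_graphLaplacian_self_nonneg hS.1 hS.2 w)) hbound
    (fun w hw ↦ mem_closedBall_zero_iff.1 hw) hcr.le
  convert hconv using 1
  · ext p
    simp [and_assoc]
  · funext p
    simp [add_comm]

/-- The function `Ψ(S,W) = (κ/2)‖W‖_F² + (ν/2)‖S−A‖_F² + λ Q(W, Λ(S), W)` is convex on the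
set of pairs `(S,W)` with `S` symmetric entrywise nonnegative and
`‖W‖_F ≤ √(νκ)/(2λ(√n+1))`. -/
theorem stmt0 (n d q : ℕ) (hn : 0 < n) (hd : 0 < d) (hq : 0 < q)
    (κ ν lam : ℝ) (hκ : 0 < κ) (hν : 0 < ν) (hlam : 0 < lam)
    (A : Matrix (Fin n) (Fin n) ℝ) :
    ConvexOn ℝ
      {p : Matrix (Fin n) (Fin n) ℝ × (Fin n → Matrix (Fin d) (Fin q) ℝ) |
        p.1.IsSymm ∧ (∀ i j, 0 ≤ p.1 i j) ∧
        collFrob p.2 ≤ Real.sqrt (ν * κ) / (2 * lam * (Real.sqrt n + 1))}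
      (fun p => κ / 2 * collFrobSq p.2 + ν / 2 * frobSq (p.1 - A)
        + lam * QForm p.2 (lap p.1) p.2) := by
  simpa only [Fintype.card_fin, frobSq_eq_norm_sq, collFrobSq_eq_norm_sq, collFrob_eq_norm,
    QForm_lap_eq_blockForm] using!
    (stmt0_general (H := Matrix (Fin d) (Fin q) ℝ) hκ.le hν.le hlam A).comp_linearMap
      (LinearMap.id.prodMap (WithLp.linearEquiv 2 ℝ _).symm.toLinearMap)
end

section
/- Let α, β be positive real numbers. Then the function (w,s) ↦ s·w² + α·s² + β·w² is convex on the convex set { (w,s) ∈ ℝ² : s ≥ 0 and w² ≤ α·β }. -/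
open scoped BigOperators
open Matrix

/-!
The objective is a cubic polynomial, so its second differential is affine in the base point. Writing
the convexity gap along a chord as the integral of the second differential against the triangular
Green kernel of the chord therefore gives a multiple of the second differential at a single point,
the centroid of that kernel. This centroid is a convex combination of the endpoints, and by
Cauchy–Schwarz the second differential is positive semidefinite on the convex region
`‖w‖² ≤ α (s + β)`, which contains the one in the theorem.
-/

section

variable {E : Type*} [NormedAddCommGroup E]

/-- The function `(w, s) ↦ s ‖w‖² + α s² + β ‖w‖²`, with `w` in a normed space in place of the
real line. -/
def coupledObjective (α β : ℝ) (p : E × ℝ) : ℝ :=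
  p.2 * ‖p.1‖ ^ 2 + α * p.2 ^ 2 + β * ‖p.1‖ ^ 2

variable (E) in
/-- The region `‖w‖² ≤ α (s + β)`, which for `0 < α` and `E ≠ 0` is exactly where the
second differential of `coupledObjective α β` is positive semidefinite. -/
def coupledRegion (α β : ℝ) : Set (E × ℝ) :=
  {p | ‖p.1‖ ^ 2 ≤ α * (p.2 + β)}

theorem convex_coupledRegion [NormedSpace ℝ E] (α β : ℝ) : Convex ℝ (coupledRegion E α β) := by
  intro x hx y hy a b ha hb hab
  have hsq : ConvexOn ℝ Set.univ (fun w : E ↦ ‖w‖ ^ 2) :=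
    convexOn_univ_norm.pow (fun _ _ ↦ norm_nonneg _) 2
  calc ‖a • x.1 + b • y.1‖ ^ 2
      ≤ a * ‖x.1‖ ^ 2 + b * ‖y.1‖ ^ 2 := hsq.2 trivial trivial ha hb hab
    _ ≤ a * (α * (x.2 + β)) + b * (α * (y.2 + β)) := by gcongr <;> assumption
    _ = α * (a * x.2 + b * y.2 + β) := by linear_combination α * β * hab

variable [InnerProductSpace ℝ E] {α β : ℝ}

/-- Half of the second differential of `coupledObjective α β` at `p`, as a quadratic form in the
direction `h`. -/
def coupledHalfHessian (α β : ℝ) (p h : E × ℝ) : ℝ :=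
  (p.2 + β) * ‖h.1‖ ^ 2 + 2 * h.2 * inner ℝ p.1 h.1 + α * h.2 ^ 2

theorem coupledHalfHessian_nonneg (hα : 0 < α) {p : E × ℝ} (hp : p ∈ coupledRegion E α β)
    (h : E × ℝ) : 0 ≤ coupledHalfHessian α β p h := by
  have cauchy_schwarz : inner ℝ p.1 h.1 ^ 2 ≤ ‖p.1‖ ^ 2 * ‖h.1‖ ^ 2 := by
    rw [← mul_pow, ← sq_abs]
    gcongr
    exact abs_real_inner_le_norm p.1 h.1
  have hregion : ‖p.1‖ ^ 2 * ‖h.1‖ ^ 2 ≤ α * (p.2 + β) * ‖h.1‖ ^ 2 :=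
    mul_le_mul_of_nonneg_right hp (sq_nonneg _)
  refine nonneg_of_mul_nonneg_right ?_ hα
  calc 0 ≤ (α * h.2 + inner ℝ p.1 h.1) ^ 2 := sq_nonneg _
    _ = inner ℝ p.1 h.1 ^ 2 + α * (2 * h.2 * inner ℝ p.1 h.1 + α * h.2 ^ 2) := by ring
    _ ≤ α * (p.2 + β) * ‖h.1‖ ^ 2 + α * (2 * h.2 * inner ℝ p.1 h.1 + α * h.2 ^ 2) := by
      gcongr
      exact cauchy_schwarz.trans hregion
    _ = α * coupledHalfHessian α β p h := by rw [coupledHalfHessian]; ring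

-- With the endpoints at `0` and `1`, the Green kernel is the triangle over `[0, 1]` with apex `b`,
-- whose centroid is `(0 + 1 + b) / 3`.
theorem coupledObjective_chord_gap (α β : ℝ) (x y : E × ℝ) {a b : ℝ} (hab : a + b = 1) :
    a * coupledObjective α β x + b * coupledObjective α β y -
        coupledObjective α β (a • x + b • y) =
      a * b * coupledHalfHessian α β (((1 + a) / 3) • x + ((1 + b) / 3) • y) (x - y) := by
  obtain rfl : b = 1 - a := eq_sub_of_add_eq' hab
  simp only [coupledObjective, coupledHalfHessian, Prod.fst_add, Prod.snd_add, Prod.fst_sub,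
    Prod.snd_sub, Prod.smul_fst, Prod.smul_snd, smul_eq_mul, ← real_inner_self_eq_norm_sq,
    inner_add_left, inner_add_right, inner_sub_left, inner_sub_right, real_inner_smul_left,
    real_inner_smul_right, real_inner_comm x.1 y.1]
  ring

theorem stmt1_general (hα : 0 < α) (β : ℝ) :
    ConvexOn ℝ (coupledRegion E α β) (coupledObjective α β) := by
  refine ⟨convex_coupledRegion α β, fun x hx y hy a b ha hb hab ↦ ?_⟩
  have hcentroid : ((1 + a) / 3) • x + ((1 + b) / 3) • y ∈ coupledRegion E α β :=
    convex_coupledRegion α β hx hy (by positivity) (by positivity) (by linarith)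
  rw [← sub_nonneg, smul_eq_mul, smul_eq_mul, coupledObjective_chord_gap α β x y hab]
  exact mul_nonneg (mul_nonneg ha hb) (coupledHalfHessian_nonneg hα hcentroid _)

end

theorem coupledObjective_real (α β : ℝ) :
    coupledObjective α β = fun p : ℝ × ℝ ↦ p.2 * p.1 ^ 2 + α * p.2 ^ 2 + β * p.1 ^ 2 := by
  simp only [funext_iff, coupledObjective, Real.norm_eq_abs, sq_abs, implies_true]

theorem convex_setOf_nonneg_snd_and_sq_fst_le (c : ℝ) :
    Convex ℝ {p : ℝ × ℝ | 0 ≤ p.2 ∧ p.1 ^ 2 ≤ c} := by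
  have hsq : Convex ℝ {w : ℝ | w ^ 2 ≤ c} := by
    simpa only [Set.mem_univ, true_and] using even_two.convexOn_pow.convex_le c
  exact ((convex_Ici 0).linear_preimage (LinearMap.snd ℝ ℝ ℝ)).inter
    (hsq.linear_preimage (LinearMap.fst ℝ ℝ ℝ))

theorem setOf_nonneg_snd_and_sq_fst_le_subset_coupledRegion {α : ℝ} (hα : 0 ≤ α) (β : ℝ) :
    {p : ℝ × ℝ | 0 ≤ p.2 ∧ p.1 ^ 2 ≤ α * β} ⊆ coupledRegion ℝ α β := by
  rintro p ⟨hs, hw⟩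
  calc ‖p.1‖ ^ 2 = p.1 ^ 2 := by rw [Real.norm_eq_abs, sq_abs]
    _ ≤ α * β := hw
    _ ≤ α * (p.2 + β) := by gcongr; exact le_add_of_nonneg_left hs

/-- The function `(w,s) ↦ s w² + α s² + β w²` is convex on
`{(w,s) : 0 ≤ s ∧ w² ≤ α β}`. -/
theorem stmt1 (α β : ℝ) (hα : 0 < α) (hβ : 0 < β) :
    ConvexOn ℝ {p : ℝ × ℝ | 0 ≤ p.2 ∧ p.1 ^ 2 ≤ α * β}
      (fun p => p.2 * p.1 ^ 2 + α * p.2 ^ 2 + β * p.1 ^ 2) := by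
  simpa only [coupledObjective_real] using (stmt1_general hα β).subset
    (setOf_nonneg_snd_and_sq_fst_le_subset_coupledRegion hα.le β)
    (convex_setOf_nonneg_snd_and_sq_fst_le (α * β))
end

section
/- Let n, d, q be positive integers, let κ, ν, λ be positive reals, let A ∈ ℝ^{n×n}, let Z₀ ∈ ℝ^{n×n} be such that A + Z₀ is symmetric with all entries nonnegative, and let W₀ be a collection of n real d×q matrices. Define R(Z,W) = (ν/2)‖Z‖_F² + (κ/2)‖W‖_F² + λ·(2·Q(W, Λ(Z), W₀) + Q(W, Λ(A+Z₀), W)). Then for all Z ∈ ℝ^{n×n} and all collections W of n real d×q matrices, R(Z,W) ≥ (ν/2)‖Z‖_F² + (κ/2)‖W‖_F² − 2λ(√n + 1)·‖W‖_F·‖Z‖_F·‖W₀‖_F. -/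
open scoped BigOperators
open Matrix

/-!
The form `Q(W, M, V)` is the Frobenius pairing of `M` with the matrix of inner products
`Tr((W i)ᵀ (V j))`, and that matrix has Frobenius norm at most `‖W‖ ‖V‖`; hence
`|Q(W, M, V)| ≤ ‖W‖ ‖M‖ ‖V‖`. Splitting `Λ(Z) = D(Z) - Z` and using `‖D(Z)‖ ≤ √n ‖Z‖`
(Cauchy–Schwarz on each row sum) bounds the cross term by `(√n + 1) ‖W‖ ‖Z‖ ‖W₀‖`. The remaining
term is nonnegative because `2 Q(W, Λ(S), W) = ∑ i j, S i j ‖W i - W j‖²` whenever every row sum of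
`S` equals the corresponding column sum, as for symmetric `S`.
-/

theorem sq_sum_sum_mul_le_sum_sum_sq_mul_sum_sum_sq {ι ι' R : Type*} [Fintype ι] [Fintype ι']
    [CommSemiring R] [LinearOrder R] [IsStrictOrderedRing R] [ExistsAddOfLE R]
    (f g : ι → ι' → R) :
    (∑ i, ∑ j, f i j * g i j) ^ 2 ≤ (∑ i, ∑ j, f i j ^ 2) * ∑ i, ∑ j, g i j ^ 2 := by
  simpa only [Fintype.sum_prod_type, Function.uncurry_apply_pair] using
    Finset.sum_mul_sq_le_sq_mul_sq Finset.univ (Function.uncurry f) (Function.uncurry g)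

theorem trace_transpose_mul_eq_sum_sum {m n R : Type*} [Fintype m] [Fintype n]
    [NonUnitalNonAssocSemiring R] (X Y : Matrix m n R) :
    (Xᵀ * Y).trace = ∑ i, ∑ j, X i j * Y i j := by
  simp only [trace, diag_apply, mul_apply, transpose_apply]
  exact Finset.sum_comm

section Frobenius

variable {m n : ℕ}

theorem frobSq_nonneg (X : Matrix (Fin m) (Fin n) ℝ) : 0 ≤ frobSq X := by
  unfold frobSq
  positivity

theorem sq_trace_transpose_mul_le (X Y : Matrix (Fin m) (Fin n) ℝ) :
    (Xᵀ * Y).trace ^ 2 ≤ frobSq X * frobSq Y := by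
  rw [trace_transpose_mul_eq_sum_sum]
  exact sq_sum_sum_mul_le_sum_sum_sq_mul_sum_sum_sq X Y

theorem abs_trace_transpose_mul_le (X Y : Matrix (Fin m) (Fin n) ℝ) :
    |(Xᵀ * Y).trace| ≤ frob X * frob Y := by
  rw [frob, frob, ← Real.sqrt_mul (frobSq_nonneg X)]
  exact Real.abs_le_sqrt (sq_trace_transpose_mul_le X Y)

theorem trace_transpose_mul_self_eq_frobSq (X : Matrix (Fin m) (Fin n) ℝ) :
    (Xᵀ * X).trace = frobSq X := by
  simp only [trace_transpose_mul_eq_sum_sum, frobSq, sq]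

theorem frobSq_sub (X Y : Matrix (Fin m) (Fin n) ℝ) :
    frobSq (X - Y) = frobSq X + frobSq Y - 2 * (Xᵀ * Y).trace := by
  simp only [trace_transpose_mul_eq_sum_sum, frobSq, Finset.mul_sum, Matrix.sub_apply,
    ← Finset.sum_add_distrib, ← Finset.sum_sub_distrib]
  refine Finset.sum_congr rfl fun i _ => Finset.sum_congr rfl fun j _ => ?_
  ring

theorem frobSq_diagonal (v : Fin n → ℝ) : frobSq (diagonal v) = ∑ i, v i ^ 2 := by
  simp [frobSq, diagonal_apply]

theorem frobSq_degMatrix_le (Z : Matrix (Fin n) (Fin n) ℝ) :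
    frobSq (degMatrix Z) ≤ n * frobSq Z := by
  rw [degMatrix, frobSq_diagonal, frobSq, Finset.mul_sum]
  refine Finset.sum_le_sum fun i _ => ?_
  simpa only [Finset.card_univ, Fintype.card_fin] using
    sq_sum_le_card_mul_sum_sq (s := Finset.univ) (f := Z i)

theorem frob_degMatrix_le (Z : Matrix (Fin n) (Fin n) ℝ) :
    frob (degMatrix Z) ≤ √n * frob Z := by
  rw [frob, frob, ← Real.sqrt_mul n.cast_nonneg]
  exact Real.sqrt_le_sqrt (frobSq_degMatrix_le Z)

end Frobenius

section QForm

variable {n d q : ℕ} (W V : Fin n → Matrix (Fin d) (Fin q) ℝ)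

theorem collFrobSq_nonneg : 0 ≤ collFrobSq W :=
  Finset.sum_nonneg fun i _ => frobSq_nonneg (W i)

/-- The matrix of Frobenius inner products between the members of two collections. It represents
`QForm` as a Frobenius pairing, so that Cauchy–Schwarz applies to `QForm`. -/
noncomputable def crossGram : Matrix (Fin n) (Fin n) ℝ :=
  of fun i j => ((W i)ᵀ * V j).trace

theorem QForm_eq_trace_transpose_mul_crossGram (M : Matrix (Fin n) (Fin n) ℝ) :
    QForm W M V = (Mᵀ * crossGram W V).trace :=
  (trace_transpose_mul_eq_sum_sum M (crossGram W V)).symm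

theorem frobSq_crossGram_le : frobSq (crossGram W V) ≤ collFrobSq W * collFrobSq V := by
  rw [collFrobSq, collFrobSq, Finset.sum_mul_sum]
  exact Finset.sum_le_sum fun i _ => Finset.sum_le_sum fun j _ =>
    sq_trace_transpose_mul_le (W i) (V j)

theorem frob_crossGram_le : frob (crossGram W V) ≤ collFrob W * collFrob V := by
  rw [frob, collFrob, collFrob, ← Real.sqrt_mul (collFrobSq_nonneg W)]
  exact Real.sqrt_le_sqrt (frobSq_crossGram_le W V)

theorem abs_QForm_le (M : Matrix (Fin n) (Fin n) ℝ) :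
    |QForm W M V| ≤ frob M * (collFrob W * collFrob V) :=
  calc |QForm W M V| = |(Mᵀ * crossGram W V).trace| := by
        rw [QForm_eq_trace_transpose_mul_crossGram]
    _ ≤ frob M * frob (crossGram W V) := abs_trace_transpose_mul_le M (crossGram W V)
    _ ≤ frob M * (collFrob W * collFrob V) :=
        mul_le_mul_of_nonneg_left (frob_crossGram_le W V) (Real.sqrt_nonneg _)

theorem QForm_sub (M N : Matrix (Fin n) (Fin n) ℝ) :
    QForm W (M - N) V = QForm W M V - QForm W N V := by
  simp only [QForm, Matrix.sub_apply, sub_mul, Finset.sum_sub_distrib]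

theorem abs_QForm_lap_le (Z : Matrix (Fin n) (Fin n) ℝ) :
    |QForm W (lap Z) V| ≤ (√n + 1) * collFrob W * frob Z * collFrob V := by
  have hWV : 0 ≤ collFrob W * collFrob V := mul_nonneg (Real.sqrt_nonneg _) (Real.sqrt_nonneg _)
  calc |QForm W (lap Z) V| = |QForm W (degMatrix Z) V - QForm W Z V| := by rw [lap, QForm_sub]
    _ ≤ |QForm W (degMatrix Z) V| + |QForm W Z V| := abs_sub _ _
    _ ≤ frob (degMatrix Z) * (collFrob W * collFrob V) + frob Z * (collFrob W * collFrob V) :=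
        add_le_add (abs_QForm_le W V _) (abs_QForm_le W V Z)
    _ ≤ √n * frob Z * (collFrob W * collFrob V) + frob Z * (collFrob W * collFrob V) := by
        gcongr
        exact frob_degMatrix_le Z
    _ = (√n + 1) * collFrob W * frob Z * collFrob V := by ring

theorem QForm_diagonal (v : Fin n → ℝ) :
    QForm W (diagonal v) V = ∑ i, v i * ((W i)ᵀ * V i).trace := by
  simp only [QForm, diagonal_apply, ite_mul, zero_mul, Finset.sum_ite_eq, Finset.mem_univ, if_true]

theorem QForm_degMatrix_self (S : Matrix (Fin n) (Fin n) ℝ) :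
    QForm W (degMatrix S) W = ∑ i, ∑ j, S i j * frobSq (W i) := by
  simp only [degMatrix, QForm_diagonal, trace_transpose_mul_self_eq_frobSq, Finset.sum_mul]

variable {S : Matrix (Fin n) (Fin n) ℝ}

theorem two_mul_QForm_lap_self (hbal : ∀ i, ∑ j, S i j = ∑ j, S j i) :
    2 * QForm W (lap S) W = ∑ i, ∑ j, S i j * frobSq (W i - W j) := by
  have hcol : QForm W (degMatrix S) W = ∑ i, ∑ j, S i j * frobSq (W j) := by
    rw [QForm_degMatrix_self, Finset.sum_comm (f := fun i j => S i j * frobSq (W j))]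
    simp only [← Finset.sum_mul, hbal]
  calc 2 * QForm W (lap S) W
      = QForm W (degMatrix S) W + QForm W (degMatrix S) W - 2 * QForm W S W := by
        rw [lap, QForm_sub]; ring
    _ = ∑ i, ∑ j, S i j * frobSq (W i) + ∑ i, ∑ j, S i j * frobSq (W j)
          - 2 * ∑ i, ∑ j, S i j * ((W i)ᵀ * W j).trace := by
        nth_rewrite 1 [QForm_degMatrix_self]
        rw [hcol, QForm]
    _ = ∑ i, ∑ j, S i j * frobSq (W i - W j) := by
        simp only [frobSq_sub, Finset.mul_sum, mul_sub, mul_add, Finset.sum_add_distrib,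
          Finset.sum_sub_distrib, mul_left_comm]

theorem QForm_lap_self_nonneg (hbal : ∀ i, ∑ j, S i j = ∑ j, S j i)
    (hoff : ∀ i j, i ≠ j → 0 ≤ S i j) : 0 ≤ QForm W (lap S) W := by
  suffices 0 ≤ 2 * QForm W (lap S) W from nonneg_of_mul_nonneg_right this two_pos
  rw [two_mul_QForm_lap_self W hbal]
  refine Finset.sum_nonneg fun i _ => Finset.sum_nonneg fun j _ => ?_
  obtain rfl | hij := eq_or_ne i j
  · simp [frobSq]
  · exact mul_nonneg (hoff i j hij) (frobSq_nonneg _)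

end QForm

theorem stmt9_general {n d q : ℕ} (κ ν : ℝ) {lam : ℝ} (hlam : 0 ≤ lam)
    {S : Matrix (Fin n) (Fin n) ℝ} (hbal : ∀ i, ∑ j, S i j = ∑ j, S j i)
    (hoff : ∀ i j, i ≠ j → 0 ≤ S i j) (W₀ W : Fin n → Matrix (Fin d) (Fin q) ℝ)
    (Z : Matrix (Fin n) (Fin n) ℝ) :
    ν / 2 * frobSq Z + κ / 2 * collFrobSq W
        - 2 * lam * (√n + 1) * collFrob W * frob Z * collFrob W₀
      ≤ ν / 2 * frobSq Z + κ / 2 * collFrobSq W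
        + lam * (2 * QForm W (lap Z) W₀ + QForm W (lap S) W) := by
  have hcross : -((√n + 1) * collFrob W * frob Z * collFrob W₀) ≤ QForm W (lap Z) W₀ :=
    neg_le_of_abs_le (abs_QForm_lap_le W W₀ Z)
  have hquad : 0 ≤ QForm W (lap S) W := QForm_lap_self_nonneg W hbal hoff
  have hsum : -(2 * ((√n + 1) * collFrob W * frob Z * collFrob W₀))
      ≤ 2 * QForm W (lap Z) W₀ + QForm W (lap S) W := by linarith
  linarith [mul_le_mul_of_nonneg_left hsum hlam]

/-- Lower bound on the quadratic part `R(Z,W)` of `Ψ(A+Z₀+Z, W₀+W)`: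
`R(Z,W) ≥ (ν/2)‖Z‖_F² + (κ/2)‖W‖_F² − 2λ(√n+1)‖W‖_F ‖Z‖_F ‖W₀‖_F`. -/
theorem stmt9 (n d q : ℕ) (hn : 0 < n) (hd : 0 < d) (hq : 0 < q)
    (κ ν lam : ℝ) (hκ : 0 < κ) (hν : 0 < ν) (hlam : 0 < lam)
    (A Z₀ : Matrix (Fin n) (Fin n) ℝ) (hsymm : (A + Z₀).IsSymm)
    (hpos : ∀ i j, 0 ≤ (A + Z₀) i j)
    (W₀ : Fin n → Matrix (Fin d) (Fin q) ℝ) :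
    ∀ (Z : Matrix (Fin n) (Fin n) ℝ) (W : Fin n → Matrix (Fin d) (Fin q) ℝ),
      ν / 2 * frobSq Z + κ / 2 * collFrobSq W
          + lam * (2 * QForm W (lap Z) W₀ + QForm W (lap (A + Z₀)) W)
        ≥ ν / 2 * frobSq Z + κ / 2 * collFrobSq W
          - 2 * lam * (Real.sqrt n + 1) * collFrob W * frob Z * collFrob W₀ := by
  intro Z W
  have hbal (i : Fin n) : ∑ j, (A + Z₀) i j = ∑ j, (A + Z₀) j i := by simp only [hsymm.apply]
  exact stmt9_general κ ν hlam.le hbal (fun i j _ => hpos i j) W₀ W Z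
end
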